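/- arXiv:1909.05121 — 4 statements merged into one kernel-verified Lean document; each statement's English description precedes it below -/
import Mathlib

section
/- Every finite arborescence admits a unique independent dominating set. That is, if D is an orientation of a finite tree in which some root vertex r has a directed path from r to every other vertex, then D has exactly one independent dominating set. -/
/-!
In an acyclic orientation of a finite digraph the arc relation `A` is well-founded. A set `S` is an
independent dominating set exactly when, for every `v`, `v ∈ S` if and only if no in-neighbor of `v`
lies in `S`; this is a recursive specification along `A`, so well-foundedness gives existence and
uniqueness (`existsUnique_indepDomSet_of_wellFounded`). An orientation of a tree has no directed
cycle because every edge is a bridge: after following an arc `u → v`, a directed walk can never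
leave the side of `v` (`not_reflTransGen_of_arc`).
-/

/-- `S` is a dominating set for the arc relation `A`: every vertex not in `S`
has an in-neighbor in `S`. -/
def DomSet {V : Type*} (A : V → V → Prop) (S : Set V) : Prop :=
  ∀ v ∉ S, ∃ u ∈ S, A u v

/-- `S` is independent for the arc relation `A`: no arc joins two vertices of `S`. -/
def IndepSet {V : Type*} (A : V → V → Prop) (S : Set V) : Prop :=
  ∀ u ∈ S, ∀ v ∈ S, ¬ A u v

/-- `S` is an independent dominating set for the arc relation `A`. -/
def IndepDomSet {V : Type*} (A : V → V → Prop) (S : Set V) : Prop :=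
  IndepSet A S ∧ DomSet A S

/-- `A` is an orientation of the simple graph `G`: each edge of `G` is assigned
exactly one direction, and all arcs come from edges of `G`. -/
def IsOrientation {V : Type*} (G : SimpleGraph V) (A : V → V → Prop) : Prop :=
  (∀ u v, G.Adj u v ↔ (A u v ∨ A v u)) ∧ (∀ u v, A u v → ¬ A v u)

theorem indepDomSet_iff {V : Type*} (A : V → V → Prop) (S : Set V) :
    IndepDomSet A S ↔ ∀ v, v ∈ S ↔ ∀ u, A u v → u ∉ S := by
  constructor
  · rintro ⟨hi, hd⟩ v
    refine ⟨fun hv u huv hu => hi u hu v hv huv, fun h => ?_⟩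
    by_contra hv
    obtain ⟨u, hu, huv⟩ := hd v hv
    exact h u huv hu
  · intro h
    refine ⟨fun u hu v hv huv => (h v).1 hv u huv hu, fun v hv => ?_⟩
    by_contra! hc
    exact hv ((h v).2 fun u huv hu => hc u hu huv)

theorem existsUnique_indepDomSet_of_wellFounded {V : Type*} (A : V → V → Prop)
    (hwf : WellFounded A) : ∃! S : Set V, IndepDomSet A S := by
  simp only [indepDomSet_iff]
  let P : V → Prop := hwf.fix fun v ih => ∀ u, ∀ h : A u v, ¬ ih u h
  refine ⟨{v | P v}, fun v => ?_, fun T hT => ?_⟩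
  · exact iff_of_eq (hwf.fix_eq _ v)
  · ext v
    induction v using hwf.induction with
    | _ v ih =>
      have hP : P v ↔ ∀ u, A u v → ¬ P u := iff_of_eq (hwf.fix_eq _ v)
      rw [hT v, Set.mem_ofPred_eq, hP]
      exact forall₂_congr fun u huv => not_congr (ih u huv)

/-- In an oriented forest, the tail of an arc cannot be reached from its head. -/
theorem not_reflTransGen_of_arc {V : Type*} {G : SimpleGraph V} (hG : G.IsAcyclic)
    {A : V → V → Prop} (hor : IsOrientation G A) {u v : V} (huv : A u v) :
    ¬ Relation.ReflTransGen A v u := by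
  intro hvu
  have hbr : ¬ (G.deleteEdges {s(u, v)}).Reachable u v :=
    SimpleGraph.isBridge_iff.1
      (SimpleGraph.isAcyclic_iff_forall_adj_isBridge.1 hG ((hor.1 u v).2 (.inl huv)))
  -- With the bridge `uv` deleted, every vertex on the directed walk stays in the component of `v`.
  have key : ∀ w, Relation.ReflTransGen A v w →
      (G.deleteEdges {s(u, v)}).Reachable v w := by
    intro w hw
    induction hw with
    | refl => rfl
    | @tail x y _ hxy ih =>
      refine ih.trans (SimpleGraph.Adj.reachable ?_)
      rw [SimpleGraph.deleteEdges_adj]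
      refine ⟨(hor.1 x y).2 (.inl hxy), fun h => ?_⟩
      rcases Sym2.eq_iff.1 (Set.mem_singleton_iff.1 h) with ⟨rfl, rfl⟩ | ⟨rfl, rfl⟩
      · exact hbr ih.symm
      · exact hor.2 _ _ huv hxy
  exact hbr (key u hvu).symm

/-- Every finite arborescence (an orientation of a finite tree having a root `r`
with a directed path from `r` to every other vertex) admits a unique independent
dominating set. -/
theorem stmt_9 {V : Type*} [Fintype V] (G : SimpleGraph V) (hT : G.IsTree)
    (A : V → V → Prop) (hor : IsOrientation G A)
    (hroot : ∃ r : V, ∀ v : V, Relation.ReflTransGen A r v) :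
    ∃! S : Set V, IndepDomSet A S := by
  have hirr : ∀ v, ¬ Relation.TransGen A v v := fun v hv => by
    obtain ⟨w, hvw, hwv⟩ := Relation.TransGen.head'_iff.1 hv
    exact not_reflTransGen_of_arc hT.isAcyclic hor hvw hwv
  have : Std.Irrefl (Relation.TransGen A) := ⟨hirr⟩
  have hwf : WellFounded (Relation.TransGen A) := Finite.wellFounded_of_trans_of_irrefl _
  exact existsUnique_indepDomSet_of_wellFounded A
    (Subrelation.wf (fun h => Relation.TransGen.single h) hwf)
end

section
/- Every finite anti-arborescence admits a unique independent dominating set. That is, if D is an orientation of a finite tree in which some root vertex r has a directed path from every other vertex to r, then D has exactly one independent dominating set. -/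
theorem existsUnique_indepDomSet {V : Type*} {A : V → V → Prop} (hA : WellFounded A) :
    ∃! S : Set V, IndepDomSet A S := by
  refine ⟨{v | hA.fix (C := fun _ => Prop) (fun v K => ∀ u (h : A u v), ¬ K u h) v}, ?_, ?_⟩
  · refine (indepDomSet_iff A _).2 fun v => ?_
    simp only [Set.mem_ofPred_eq]
    rw [hA.fix_eq]
  · intro T hT
    rw [indepDomSet_iff] at hT
    ext v
    induction v using hA.induction with
    | _ v ih =>
      rw [hT v, Set.mem_ofPred_eq, hA.fix_eq]
      exact forall₂_congr fun u huv => not_congr (ih u huv)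

theorem wellFounded_of_isOrientation {V : Type*} [Finite V] {G : SimpleGraph V}
    (hG : G.IsAcyclic) {A : V → V → Prop} (hor : IsOrientation G A) : WellFounded A := by
  have hirr : Std.Irrefl (Relation.TransGen A) := ⟨fun v hv => by
    obtain ⟨w, hvw, hwv⟩ := Relation.TransGen.head'_iff.1 hv
    exact not_reflTransGen_of_arc hG hor hvw hwv⟩
  exact Subrelation.wf Relation.TransGen.single
    (Finite.wellFounded_of_trans_of_irrefl (Relation.TransGen A))

/-- Every finite anti-arborescence (an orientation of a finite tree having a root `r`
with a directed path from every other vertex to `r`) admits a unique independent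
dominating set. -/
theorem stmt_10 {V : Type*} [Fintype V] (G : SimpleGraph V) (hT : G.IsTree)
    (A : V → V → Prop) (hor : IsOrientation G A)
    (hroot : ∃ r : V, ∀ v : V, Relation.ReflTransGen A v r) :
    ∃! S : Set V, IndepDomSet A S := by
  exact existsUnique_indepDomSet (wellFounded_of_isOrientation hT.isAcyclic hor)
end

section
/- Let D be any orientation of the cycle graph C_n (n ≥ 3) that is not a directed odd cycle (i.e., it is not the case that n is odd and every vertex has out-degree exactly one). Then D admits an independent dominating set. Consequently, an orientation of a cycle admits an independent dominating set if and only if it is not a directed odd cycle. -/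
theorem exists_indepDomSet_of_wellFounded {V : Type*} {A : V → V → Prop} (h : WellFounded A) :
    ∃ S : Set V, IndepDomSet A S := by
  obtain ⟨P, hP⟩ : ∃ P : V → Prop, ∀ v, P v ↔ ∀ u, A u v → ¬ P u :=
    ⟨h.fix (C := fun _ => Prop) (fun v ih => ∀ u (hu : A u v), ¬ ih u hu),
      fun v => by rw [h.fix_eq]⟩
  refine ⟨{v | P v}, fun u hu v hv huv => (hP v).1 hv u huv hu, fun v hv => ?_⟩
  by_contra hcon
  exact hv ((hP v).2 fun u huv hu => hcon ⟨u, hu, huv⟩)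

theorem Fin.forall_of_step {n : ℕ} [NeZero n] {P : Fin n → Prop} {d : Fin n}
    (hd : ∀ j : Fin n, ∃ k : ℕ, j = k • d) (h : ∀ i, P i → P (i + d)) {i₀ : Fin n} (h₀ : P i₀) :
    ∀ i, P i := by
  intro i
  have key : ∀ k : ℕ, P (i₀ + k • d) := by
    intro k
    induction k with
    | zero => simpa using h₀
    | succ k ih => rw [succ_nsmul, ← add_assoc]; exact h _ ih
  obtain ⟨k, hk⟩ := hd (i - i₀)
  have := key k
  rwa [← hk, add_sub_cancel] at this

open scoped Fin.CommRing in
theorem Fin.exists_nsmul_one {n : ℕ} [NeZero n] (j : Fin n) : ∃ k : ℕ, j = k • (1 : Fin n) :=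
  ⟨j.val, by simp⟩

/-- An inaccessible vertex forces a directed cycle: walking backwards along arcs through
inaccessible vertices keeps its sense of rotation and so visits every edge. -/
theorem wellFounded_of_not_directed {n : ℕ} [NeZero n] {A : Fin n → Fin n → Prop}
    (hasym : ∀ i j : Fin n, A i j → ¬ A j i)
    (harcs : ∀ i j : Fin n, A i j → (j = i + 1 ∨ i = j + 1))
    (hd : ¬ ((∀ i : Fin n, A i (i + 1)) ∨ (∀ i : Fin n, A (i + 1) i))) : WellFounded A := by
  have pred : ∀ v, ¬ Acc A v → ∃ u, A u v ∧ ¬ Acc A u := by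
    intro v hv
    by_contra! hcon
    exact hv ⟨v, hcon⟩
  refine ⟨fun v => ?_⟩
  by_contra hv
  obtain ⟨u, huv, hu⟩ := pred v hv
  apply hd
  rcases harcs u v huv with rfl | rfl
  · left
    have key : ∀ i, ¬ Acc A i ∧ A i (i + 1) := by
      refine Fin.forall_of_step (d := -1) (fun j => ?_) (fun i hi => ?_) ⟨hu, huv⟩
      · obtain ⟨k, hk⟩ := Fin.exists_nsmul_one (-j)
        exact ⟨k, by rw [neg_nsmul, ← hk, neg_neg]⟩
      · obtain ⟨w, hwi, hw⟩ := pred i hi.1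
        rcases harcs w i hwi with h | h
        · have hw' : w = i + -1 := by rw [h]; abel
          rw [← hw', ← h]
          exact ⟨hw, hwi⟩
        · rw [h] at hwi
          exact absurd hi.2 (hasym _ _ hwi)
    exact fun i => (key i).2
  · right
    have key : ∀ i, ¬ Acc A (i + 1) ∧ A (i + 1) i := by
      refine Fin.forall_of_step Fin.exists_nsmul_one (fun i hi => ?_) ⟨hu, huv⟩
      obtain ⟨w, hwi, hw⟩ := pred _ hi.1
      rcases harcs w _ hwi with h | h
      · rw [← add_right_cancel h] at hwi
        exact absurd hi.2 (hasym _ _ hwi)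
      · rw [← h]
        exact ⟨hw, hwi⟩
    exact fun i => (key i).2

theorem Fin.even_val_add_one {n : ℕ} [NeZero n] (he : Even n) (i : Fin n) :
    Even (i + 1).val ↔ ¬ Even i.val := by
  have h1 : (i + 1).val = (i.val + 1) % n := by
    rw [Fin.val_add, Fin.val_one', Nat.add_mod_mod]
  rw [h1, Nat.even_iff, Nat.mod_mod_of_dvd _ he.two_dvd, ← Nat.even_iff, Nat.even_add_one]

theorem exists_indepDomSet_of_even {n : ℕ} [NeZero n] (he : Even n)
    {A : Fin n → Fin n → Prop} (harcs : ∀ i j : Fin n, A i j → (j = i + 1 ∨ i = j + 1))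
    (hd : (∀ i : Fin n, A i (i + 1)) ∨ (∀ i : Fin n, A (i + 1) i)) :
    ∃ S : Set (Fin n), IndepDomSet A S := by
  have par := Fin.even_val_add_one he
  refine ⟨{i | Even i.val}, fun u hu v hv huv => ?_, fun v hv => ?_⟩
  · rcases harcs u v huv with rfl | rfl
    · exact (par u).1 hv hu
    · exact (par v).1 hu hv
  · rcases hd with hd | hd
    · have hv' : v - 1 + 1 = v := sub_add_cancel v 1
      refine ⟨v - 1, ?_, by simpa only [hv'] using hd (v - 1)⟩
      have := par (v - 1)
      rw [hv'] at this
      exact not_not.1 (mt this.2 hv)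
    · exact ⟨v + 1, (par v).2 hv, hd v⟩

/-- The odd cycle is not 2-colorable: no vertex set contains exactly one end of each edge. -/
theorem not_alternating_of_odd {n : ℕ} [NeZero n] (ho : Odd n) {S : Set (Fin n)}
    (hS : ∀ i, i + 1 ∈ S ↔ i ∉ S) : False := by
  have key : ∀ k : ℕ, k • (1 : Fin n) ∈ S ↔ (Even k ↔ (0 : Fin n) ∈ S) := by
    intro k
    induction k with
    | zero => simp
    | succ k ih =>
      rw [succ_nsmul, hS, ih, Nat.even_add_one]
      tauto
  -- Going once around the cycle returns to `0` after an odd number of steps.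
  have h0 : n • (1 : Fin n) = 0 := by
    simpa using card_nsmul_eq_zero (x := (1 : Fin n))
  have := key n
  rw [h0] at this
  have hne : ¬ Even n := Nat.not_even_iff_odd.2 ho
  tauto

/-- In a directed cycle a vertex has only one in-neighbor, so independence and domination together
say that exactly one end of each edge is chosen. -/
theorem IndepDomSet.alternating {n : ℕ} [NeZero n] {A : Fin n → Fin n → Prop}
    (hasym : ∀ i j : Fin n, A i j → ¬ A j i)
    (harcs : ∀ i j : Fin n, A i j → (j = i + 1 ∨ i = j + 1))
    (hd : (∀ i : Fin n, A i (i + 1)) ∨ (∀ i : Fin n, A (i + 1) i))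
    {S : Set (Fin n)} (hS : IndepDomSet A S) (i : Fin n) : i + 1 ∈ S ↔ i ∉ S := by
  obtain ⟨hind, hdom⟩ := hS
  rcases hd with hd | hd
  · refine ⟨fun h1 h0 => hind _ h0 _ h1 (hd i), fun h0 => ?_⟩
    by_contra h1
    obtain ⟨u, hu, hui⟩ := hdom _ h1
    rcases harcs _ _ hui with h | h
    · exact h0 (add_right_cancel h ▸ hu)
    · rw [h] at hui
      exact hasym _ _ hui (hd _)
  · refine ⟨fun h1 h0 => hind _ h1 _ h0 (hd i), fun h0 => ?_⟩
    obtain ⟨u, hu, hui⟩ := hdom _ h0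
    rcases harcs _ _ hui with h | h
    · rw [h] at hui
      exact absurd (hd u) (hasym _ _ hui)
    · exact h ▸ hu

/-- Let `A` be any orientation of the cycle graph `C_n` (`n ≥ 3`, vertices
`0, …, n-1`, each edge `{i, i+1 (mod n)}` oriented in exactly one direction and
no other arcs).  If `A` is not a directed odd cycle (`n` odd and all arcs
oriented consistently around the cycle), then `A` admits an independent
dominating set; consequently an orientation of a cycle admits an independent
dominating set if and only if it is not a directed odd cycle. -/
theorem stmt_14 (n : ℕ) [NeZero n] (hn : 3 ≤ n) (A : Fin n → Fin n → Prop)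
    (hasym : ∀ i j : Fin n, A i j → ¬ A j i)
    (harcs : ∀ i j : Fin n, A i j → (j = i + 1 ∨ i = j + 1))
    (hedges : ∀ i : Fin n, A i (i + 1) ∨ A (i + 1) i) :
    (¬ (Odd n ∧ ((∀ i : Fin n, A i (i + 1)) ∨ (∀ i : Fin n, A (i + 1) i))) →
      ∃ S : Set (Fin n), IndepDomSet A S) ∧
    ((∃ S : Set (Fin n), IndepDomSet A S) ↔
      ¬ (Odd n ∧ ((∀ i : Fin n, A i (i + 1)) ∨ (∀ i : Fin n, A (i + 1) i)))) := by
  have suff : ¬ (Odd n ∧ ((∀ i : Fin n, A i (i + 1)) ∨ (∀ i : Fin n, A (i + 1) i))) →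
      ∃ S : Set (Fin n), IndepDomSet A S := by
    intro h
    by_cases hd : (∀ i : Fin n, A i (i + 1)) ∨ (∀ i : Fin n, A (i + 1) i)
    · exact exists_indepDomSet_of_even
        (Nat.not_odd_iff_even.1 fun ho => h ⟨ho, hd⟩) harcs hd
    · exact exists_indepDomSet_of_wellFounded (wellFounded_of_not_directed hasym harcs hd)
  refine ⟨suff, ?_, suff⟩
  rintro ⟨S, hS⟩ ⟨ho, hd⟩
  exact not_alternating_of_odd ho (hS.alternating hasym harcs hd)
end

section
/- Every finite oriented bipartite graph admits an independent dominating set. That is, if D is a finite digraph whose vertex set is partitioned into sets X and Y such that every arc joins a vertex of X and a vertex of Y, then D has an independent dominating set. -/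
/-- The set of vertices having an in-neighbor in `P`. -/
def outNbhd {V : Type*} (A : V → V → Prop) (P : Set V) : Set V :=
  {v | ∃ u ∈ P, A u v}

theorem outNbhd_mono {V : Type*} (A : V → V → Prop) : Monotone (outNbhd A) :=
  fun _ _ h _ ⟨u, hu, huv⟩ => ⟨u, h hu, huv⟩

/-- The monotone map whose fixed points are the `X`-parts of independent dominating sets. -/
def kernelMap {V : Type*} (A : V → V → Prop) (X Y : Set V) : Set V →o Set V where
  toFun P := X \ outNbhd A (Y \ outNbhd A P)
  monotone' _ _ h :=
    Set.sdiff_subset_sdiff_right (outNbhd_mono A (Set.sdiff_subset_sdiff_right (outNbhd_mono A h)))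

/-- Every finite oriented bipartite graph (a finite digraph whose vertex set is
partitioned into `X` and `Y` with every arc joining a vertex of `X` and a vertex
of `Y`) admits an independent dominating set. -/
theorem stmt_18 {V : Type*} [Fintype V] (X Y : Set V)
    (hdisj : Disjoint X Y) (hunion : X ∪ Y = Set.univ)
    (A : V → V → Prop)
    (hasym : ∀ u v : V, A u v → ¬ A v u)
    (hbip : ∀ u v : V, A u v → ((u ∈ X ∧ v ∈ Y) ∨ (u ∈ Y ∧ v ∈ X))) :
    ∃ S : Set V, IndepDomSet A S := by
  obtain ⟨P, hP⟩ : ∃ P : Set V, X \ outNbhd A (Y \ outNbhd A P) = P :=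
    ⟨(kernelMap A X Y).lfp, (kernelMap A X Y).map_lfp⟩
  have hPX : ∀ v ∈ P, v ∈ X := fun v hv => (hP.ge hv).1
  have hPQ : ∀ v ∈ P, v ∉ outNbhd A (Y \ outNbhd A P) :=
    fun v hv => (hP.ge hv).2
  have hXY : ∀ v ∈ X, v ∉ Y := fun v hx hy => Set.disjoint_left.mp hdisj hx hy
  refine ⟨P ∪ (Y \ outNbhd A P), ?_, ?_⟩
  · intro u hu v hv huv
    rcases hbip u v huv with ⟨hx, hy⟩ | ⟨hy, hx⟩
    · have hu' : u ∈ P := hu.resolve_right fun h => hXY u hx h.1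
      have hv' := hv.resolve_left fun h => hXY v (hPX v h) hy
      exact hv'.2 ⟨u, hu', huv⟩
    · have hu' := hu.resolve_left fun h => hXY u (hPX u h) hy
      have hv' : v ∈ P := hv.resolve_right fun h => hXY v hx h.1
      exact hPQ v hv' ⟨u, hu', huv⟩
  · intro v hv
    have hvXY : v ∈ X ∪ Y := hunion ▸ Set.mem_univ v
    rcases hvXY with hx | hy
    · by_contra hno
      refine hv (Or.inl ?_)
      rw [← hP]
      exact ⟨hx, fun ⟨u, hu, huv⟩ => hno ⟨u, Or.inr hu, huv⟩⟩
    · by_contra hno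
      exact hv (Or.inr ⟨hy, fun ⟨u, hu, huv⟩ => hno ⟨u, Or.inl hu, huv⟩⟩)
end
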